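/- arXiv:2512.02286 — 3 statements merged into one kernel-verified Lean document; each statement's English description precedes it below -/
import Mathlib

section
/- Stembridge's Pfaffian identity (even case): for an even number m = 2n of variables x_1,...,x_{2n} in a field with x_i x_j ≠ 1 for all i < j, one has ∏_{1 ≤ i < j ≤ 2n} (x_i - x_j)/(1 - x_i x_j) = Pf[S(x_i,x_j)]_{1≤i,j≤2n}, where S(x,y) = (x - y)/(1 - xy). -/
/-- Pfaffian of a `2n × 2n` matrix, defined by
`Pf A = (1/(2^n n!)) ∑_{σ ∈ S_{2n}} sgn(σ) ∏_{i=1}^n a_{σ(2i-1) σ(2i)}`. -/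
noncomputable def pf {K : Type*} [Field K] (n : ℕ)
    (A : Matrix (Fin (2 * n)) (Fin (2 * n)) K) : K :=
  (∑ σ : Equiv.Perm (Fin (2 * n)), ((Equiv.Perm.sign σ : ℤ) : K) *
      ∏ i : Fin n,
        A (σ ⟨2 * i.1, by have := i.2; omega⟩) (σ ⟨2 * i.1 + 1, by have := i.2; omega⟩)) /
    ((2 : K) ^ n * (n.factorial : K))

/-!
With `x i = tanh (θ i)` the quotient `(x i - x j) / (1 - x i * x j)` is `tanh (θ i - θ j)`, and
the addition law of `tanh` is the only property of the matrix `A` that is needed.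

If an off-diagonal entry `A i j` vanishes, this law makes rows `i` and `j` equal and both sides
are zero. Otherwise `t b i = (A b i)⁻¹` obeys the addition law of `coth`, and for an odd number of
indices there is the partial fraction identity
`∑ b, A y b * ∏ i ≠ b, t b i = ∏ b, A y b`,
proved by adding one index at a time. It says that the product over pairs has the same expansion
along a row as the Pfaffian. The sum over permutations is the sum of these expansions over all
rows, so the identity holds for that sum in every characteristic, before any division.
-/

open Equiv Finset

section Coth

variable {ι R : Type*} [CommRing R] [DecidableEq ι]

/-- The addition law of `coth` on `s`: it holds for `t i j = coth (θ i - θ j)` and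
`f i = coth (η - θ i)`, and also for `f i = tanh (η - θ i)`, since shifting
`η` by `iπ / 2` exchanges `tanh` and `coth`. -/
def IsCothRelated (t : ι → ι → R) (f : ι → R) (s : Finset ι) : Prop :=
  ∀ i ∈ s, ∀ j ∈ s, i ≠ j → f i * t i j + 1 = f j * (f i + t i j)

/-- The weights `∏ i ≠ b, t b i` of a partial fraction expansion with simple poles indexed by
`s`. -/
def residue (t : ι → ι → R) (s : Finset ι) (b : ι) : R :=
  ∏ i ∈ s.erase b, t b i

lemma residue_insert_self {t : ι → ι → R} {s : Finset ι} {u : ι} (hu : u ∉ s) :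
    residue t (insert u s) u = ∏ i ∈ s, t u i := by
  rw [residue, erase_insert hu]

lemma residue_insert_of_mem {t : ι → ι → R} {s : Finset ι} {u b : ι} (hu : u ∉ s) (hb : b ∈ s) :
    residue t (insert u s) b = residue t s b * t b u := by
  have hub : u ≠ b := fun h => hu (h ▸ hb)
  rw [residue, erase_insert_of_ne hub, prod_insert (fun h => hu (mem_of_mem_erase h)), mul_comm,
    residue]

lemma sum_mul_residue_insert {t : ι → ι → R} {s : Finset ι} {u : ι} (hu : u ∉ s) (f : ι → R) :
    ∑ b ∈ insert u s, f b * residue t (insert u s) b =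
      f u * ∏ i ∈ s, t u i + ∑ b ∈ s, f b * t b u * residue t s b := by
  rw [sum_insert hu, residue_insert_self hu]
  congr 1
  refine sum_congr rfl fun b hb => ?_
  rw [residue_insert_of_mem hu hb]
  ring

lemma sum_residue_insert {t : ι → ι → R} {s : Finset ι} {u : ι} (hu : u ∉ s) :
    ∑ b ∈ insert u s, residue t (insert u s) b =
      ∏ i ∈ s, t u i + ∑ b ∈ s, t b u * residue t s b := by
  simpa only [one_mul] using sum_mul_residue_insert (t := t) hu fun _ => 1

lemma IsCothRelated.sum_mul_residue_insert_eq {t : ι → ι → R} {f : ι → R} {s : Finset ι} {u : ι}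
    (hu : u ∉ s) (hf : IsCothRelated t f (insert u s)) :
    ∑ b ∈ insert u s, f b * residue t (insert u s) b =
      f u * (∑ b ∈ insert u s, residue t (insert u s) b + ∑ b ∈ s, f b * residue t s b) -
        ∑ b ∈ s, residue t s b := by
  have add_law : ∀ b ∈ s, f b * t b u * residue t s b =
      f u * (t b u * residue t s b) + f u * (f b * residue t s b) - residue t s b := by
    intro b hb
    have hbu : b ≠ u := fun h => hu (h ▸ hb)
    linear_combination
      residue t s b * hf b (mem_insert_of_mem hb) u (mem_insert_self u s) hbu
  rw [sum_mul_residue_insert hu, sum_residue_insert hu, sum_congr rfl add_law, sum_sub_distrib,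
    sum_add_distrib, ← mul_sum, ← mul_sum]
  ring

lemma sum_residue_and_sum_mul_residue {t : ι → ι → R} (ht : ∀ i j, t i j = -t j i)
    (hadd : ∀ k s, k ∉ s → IsCothRelated t (t k) s) (s : Finset ι) :
    ∑ b ∈ s, residue t s b = (if Odd #s then 1 else 0) ∧
      ∀ f, IsCothRelated t f s →
        ∑ b ∈ s, f b * residue t s b = ∏ b ∈ s, f b - if Even #s then 1 else 0 := by
  induction s using Finset.induction_on with
  | empty => simp
  | insert u s hu ih =>
    obtain ⟨sum_eq, sum_mul_eq⟩ := ih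
    have card_odd : Odd #(insert u s) ↔ Even #s := by
      rw [card_insert_of_notMem hu, Nat.odd_add_one, Nat.not_odd_iff_even]
    have card_even : Even #(insert u s) ↔ Odd #s := by
      rw [card_insert_of_notMem hu, Nat.even_add_one, Nat.not_even_iff_odd]
    have sum_insert_eq :
        ∑ b ∈ insert u s, residue t (insert u s) b = if Odd #(insert u s) then 1 else 0 := by
      have flip : ∑ b ∈ s, t b u * residue t s b = -∑ b ∈ s, t u b * residue t s b := by
        simp only [ht _ u, neg_mul, sum_neg_distrib]
      rw [sum_residue_insert hu, flip, sum_mul_eq (t u) (hadd u s hu), if_congr card_odd rfl rfl]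
      ring
    refine ⟨sum_insert_eq, fun f hf => ?_⟩
    have hfs : IsCothRelated t f s := fun i hi j hj =>
      hf i (mem_insert_of_mem hi) j (mem_insert_of_mem hj)
    rw [hf.sum_mul_residue_insert_eq hu, sum_insert_eq, sum_eq, sum_mul_eq f hfs,
      prod_insert hu, if_congr card_odd rfl rfl, if_congr card_even rfl rfl]
    ring

end Coth

section Antisymmetrization

variable {α R : Type*} [CommRing R] {m : ℕ}

/-- The signed sum of `F` over all rearrangements of `v`; the Pfaffian is of this form up to a
numerical factor. -/
def antisymmetrization (F : (Fin m → α) → R) (v : Fin m → α) : R :=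
  ∑ σ : Perm (Fin m), ((Perm.sign σ : ℤ) : R) * F (v ∘ σ)

lemma antisymmetrization_const_mul (c : R) (F : (Fin m → α) → R) (v : Fin m → α) :
    antisymmetrization (fun w => c * F w) v = c * antisymmetrization F v := by
  simp only [antisymmetrization, mul_sum, mul_left_comm]

lemma antisymmetrization_eq_zero_of_swap {F : (Fin m → α) → R} {v : Fin m → α} {i j : Fin m}
    (hij : i ≠ j) (h : ∀ σ : Perm (Fin m), F (v ∘ swap i j ∘ σ) = F (v ∘ σ)) :
    antisymmetrization F v = 0 := by
  refine sum_involution (fun σ _ => swap i j * σ) ?_ ?_ ?_ ?_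
  · intro σ _
    rw [Perm.coe_mul, h, Perm.sign_mul, Perm.sign_swap hij]
    simp
  · intro σ _ _ hσ
    exact hij (swap_eq_one_iff.1 (mul_eq_right.1 hσ))
  · exact fun σ _ => mem_univ _
  · exact fun σ _ => swap_mul_self_mul i j σ

lemma comp_cycleRange_symm (v : Fin (m + 1) → α) (a : Fin (m + 1)) :
    v ∘ a.cycleRange.symm = Fin.cons (v a) (v ∘ a.succAbove) := by
  funext i
  cases i using Fin.cases <;> simp

lemma bijective_cycleRange_symm_mul_decomposeFin_symm (m : ℕ) :
    Function.Bijective fun p : Fin (m + 1) × Perm (Fin m) =>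
      p.1.cycleRange.symm * Perm.decomposeFin.symm (0, p.2) := by
  rw [Fintype.bijective_iff_injective_and_card]
  constructor
  · rintro ⟨a, τ⟩ ⟨b, ρ⟩ h
    obtain rfl : a = b := by simpa using congrArg (fun σ : Perm (Fin (m + 1)) => σ 0) h
    simpa using h
  · simp [Fintype.card_perm, Nat.factorial_succ]

lemma antisymmetrization_succ (F : (Fin (m + 1) → α) → R) (v : Fin (m + 1) → α) :
    antisymmetrization F v = ∑ a : Fin (m + 1), (-1) ^ (a : ℕ) *
      antisymmetrization (fun w => F (Fin.cons (v a) w)) (v ∘ a.succAbove) := by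
  rw [antisymmetrization,
    ← (bijective_cycleRange_symm_mul_decomposeFin_symm m).sum_comp, Fintype.sum_prod_type]
  refine sum_congr rfl fun a _ => ?_
  rw [antisymmetrization, mul_sum]
  refine sum_congr rfl fun τ _ => ?_
  have comp_eq : v ∘ ⇑(a.cycleRange.symm * Perm.decomposeFin.symm (0, τ)) =
      Fin.cons (v a) ((v ∘ a.succAbove) ∘ τ) := by
    funext i
    cases i using Fin.cases <;> simp
  rw [comp_eq]
  simp [mul_assoc]

end Antisymmetrization

section PairProduct

variable {ι R : Type*} [CommRing R] {m : ℕ}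

/-- The product of the entries above the diagonal of the matrix `A (v i) (v j)`. -/
def pairProduct (A : ι → ι → R) (v : Fin m → ι) : R :=
  ∏ i, ∏ j ∈ Ioi i, A (v i) (v j)

lemma pairProduct_cons (A : ι → ι → R) (y : ι) (w : Fin m → ι) :
    pairProduct A (Fin.cons y w : Fin (m + 1) → ι) = (∏ i, A y (w i)) * pairProduct A w := by
  simp [pairProduct, Fin.prod_univ_succ, Fin.prod_Ioi_succ]

lemma pairProduct_comp_perm {A : ι → ι → R} (hA : ∀ i j, A i j = -A j i) (v : Fin m → ι)
    (σ : Perm (Fin m)) :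
    pairProduct A (v ∘ σ) = ((Perm.sign σ : ℤ) : R) * pairProduct A v :=
  σ.prod_Ioi_comp_eq_sign_mul_prod (f := fun i j => A (v i) (v j)) fun _ _ => hA _ _

lemma pairProduct_cons_succAbove {A : ι → ι → R} (hA : ∀ i j, A i j = -A j i)
    (v : Fin (m + 1) → ι) (a : Fin (m + 1)) :
    pairProduct A (Fin.cons (v a) (v ∘ a.succAbove) : Fin (m + 1) → ι) =
      (-1) ^ (a : ℕ) * pairProduct A v := by
  rw [← comp_cycleRange_symm, pairProduct_comp_perm hA]
  simp

lemma pairProduct_eq_zero {A : ι → ι → R} {v : Fin m → ι} (hA : ∀ i j, A i j = -A j i)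
    {i j : Fin m} (hij : i ≠ j) (h : A (v i) (v j) = 0) : pairProduct A v = 0 := by
  wlog hlt : i < j generalizing i j
  · exact this hij.symm (by rw [hA, h, neg_zero]) (hij.lt_or_gt.resolve_left hlt)
  exact prod_eq_zero (mem_univ i) (prod_eq_zero (mem_Ioi.2 hlt) h)

/-- The summand of the Pfaffian of the matrix `A (v i) (v j)` at the identity permutation. -/
def matchingProduct (A : ι → ι → R) (n : ℕ) (v : Fin (2 * n) → ι) : R :=
  ∏ i : Fin n, A (v ⟨2 * i.1, by have := i.2; omega⟩) (v ⟨2 * i.1 + 1, by have := i.2; omega⟩)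

lemma matchingProduct_cons_cons (A : ι → ι → R) (n : ℕ) (y z : ι) (w : Fin (2 * n) → ι) :
    matchingProduct A (n + 1) (Fin.cons y (Fin.cons z w : Fin (2 * n + 1) → ι)) =
      A y z * matchingProduct A n w := by
  rw [matchingProduct, Fin.prod_univ_succ]
  rfl

lemma antisymmetrization_matchingProduct_succ (A : ι → ι → R) (n : ℕ)
    (v : Fin (2 * n + 2) → ι) :
    antisymmetrization (matchingProduct A (n + 1)) v =
      ∑ a : Fin (2 * n + 2), (-1) ^ (a : ℕ) * ∑ b : Fin (2 * n + 1), (-1) ^ (b : ℕ) *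
        (A (v a) (v (a.succAbove b)) *
          antisymmetrization (matchingProduct A n) (v ∘ a.succAbove ∘ b.succAbove)) := by
  refine (antisymmetrization_succ (m := 2 * n + 1) _ v).trans (sum_congr rfl fun a _ => ?_)
  rw [antisymmetrization_succ]
  simp only [matchingProduct_cons_cons, antisymmetrization_const_mul, Function.comp_apply,
    Function.comp_assoc]

end PairProduct

/-- The matrices whose entries obey the addition law of `tanh (θ i - θ j)`. The law is
required for all triples of indices, so together with the zero diagonal it gives skew-symmetry. -/
structure IsTanhKernel {ι R : Type*} [CommRing R] (A : ι → ι → R) : Prop where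
  diag_eq_zero : ∀ i, A i i = 0
  add_law : ∀ i j k, A i j + A j k + A k i + A i j * A j k * A k i = 0

namespace IsTanhKernel

section CommRing

variable {ι R : Type*} [CommRing R] {A : ι → ι → R}

lemma skew (hA : IsTanhKernel A) (i j : ι) : A i j = -A j i := by
  linear_combination hA.add_law i j i - (1 + A i j * A j i) * hA.diag_eq_zero i

lemma left_congr (hA : IsTanhKernel A) {i j : ι} (h : A i j = 0) (k : ι) : A i k = A j k := by
  linear_combination
    -(hA.add_law i j k) + (1 + A j k * A k i) * h + hA.skew i k

lemma right_congr (hA : IsTanhKernel A) {i j : ι} (h : A i j = 0) (k : ι) : A k i = A k j := by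
  rw [hA.skew, hA.left_congr h, ← hA.skew]

lemma comp {κ : Type*} (hA : IsTanhKernel A) (v : κ → ι) :
    IsTanhKernel fun i j => A (v i) (v j) :=
  ⟨fun i => hA.diag_eq_zero (v i), fun i j k => hA.add_law (v i) (v j) (v k)⟩

lemma antisymmetrization_matchingProduct_eq_zero (hA : IsTanhKernel A) {n : ℕ}
    {v : Fin (2 * n) → ι} {i j : Fin (2 * n)} (hij : i ≠ j) (h : A (v i) (v j) = 0) :
    antisymmetrization (matchingProduct A n) v = 0 := by
  have vanish_swap : ∀ k, A (v k) (v (swap i j k)) = 0 := by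
    intro k
    rcases eq_or_ne k i with rfl | hki
    · rwa [swap_apply_left]
    rcases eq_or_ne k j with rfl | hkj
    · rw [swap_apply_right, hA.skew, h, neg_zero]
    · rw [swap_apply_of_ne_of_ne hki hkj, hA.diag_eq_zero]
  have entry_swap : ∀ k l, A (v (swap i j k)) (v (swap i j l)) = A (v k) (v l) := fun k l => by
    rw [← hA.left_congr (vanish_swap k), ← hA.right_congr (vanish_swap l)]
  refine antisymmetrization_eq_zero_of_swap hij fun σ => ?_
  simp only [matchingProduct, Function.comp_apply, entry_swap]

end CommRing

variable {ι K : Type*} [Field K] {A : ι → ι → K}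

lemma isCothRelated_inv (hA : IsTanhKernel A) (hne : ∀ i j, i ≠ j → A i j ≠ 0) {k : ι}
    {s : Finset ι} (hk : k ∉ s) :
    IsCothRelated (fun i j => (A i j)⁻¹) (fun i => (A k i)⁻¹) s := by
  intro i hi j hj hij
  have hki := hne k i fun h => hk (h ▸ hi)
  have hkj := hne k j fun h => hk (h ▸ hj)
  have hij := hne i j hij
  field_simp
  linear_combination (1 + A k i * A i j) * hA.skew j k - hA.add_law k i j

lemma isCothRelated_row (hA : IsTanhKernel A) {κ : Type*} {w : κ → ι}
    (hne : ∀ i j, i ≠ j → A (w i) (w j) ≠ 0) (y : ι) (s : Finset κ) :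
    IsCothRelated (fun i j => (A (w i) (w j))⁻¹) (fun i => A y (w i)) s := by
  intro i _ j _ hij
  have hij := hne i j hij
  field_simp
  linear_combination
    hA.add_law y (w i) (w j) - (1 + A y (w i) * A (w i) (w j)) * hA.skew (w j) y

lemma sum_row_mul_residue (hA : IsTanhKernel A) {κ : Type*} [DecidableEq κ] {w : κ → ι}
    (hne : ∀ i j, i ≠ j → A (w i) (w j) ≠ 0) (y : ι) {s : Finset κ} (hs : Odd #s) :
    ∑ b ∈ s, A y (w b) * residue (fun i j => (A (w i) (w j))⁻¹) s b = ∏ b ∈ s, A y (w b) := by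
  have ht : ∀ i j, (A (w i) (w j))⁻¹ = -(A (w j) (w i))⁻¹ := fun i j => by
    rw [hA.skew, inv_neg]
  have expansion := (sum_residue_and_sum_mul_residue ht
    (fun k s hk => (hA.comp w).isCothRelated_inv hne hk) s).2 _ (hA.isCothRelated_row hne y s)
  rwa [if_neg (Nat.not_even_iff_odd.2 hs), sub_zero] at expansion

lemma residue_mul_pairProduct (hA : IsTanhKernel A) {m : ℕ} {w : Fin (m + 1) → ι}
    (hne : ∀ i j, i ≠ j → A (w i) (w j) ≠ 0) (b : Fin (m + 1)) :
    residue (fun i j => (A (w i) (w j))⁻¹) univ b * pairProduct A w =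
      (-1) ^ (b : ℕ) * pairProduct A (w ∘ b.succAbove) := by
  have residue_eq : residue (fun i j => (A (w i) (w j))⁻¹) univ b =
      (∏ i, A (w b) (w (b.succAbove i)))⁻¹ := by
    rw [residue, ← compl_singleton, ← Fin.image_succAbove_univ,
      prod_image b.succAbove_right_injective.injOn, prod_inv_distrib]
  have row_ne_zero : ∏ i, A (w b) (w (b.succAbove i)) ≠ 0 :=
    prod_ne_zero_iff.2 fun i _ => hne b _ (b.succAbove_ne i).symm
  have row_split := pairProduct_cons_succAbove hA.skew w b
  rw [pairProduct_cons] at row_split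
  have sign_sq : ((-1 : K) ^ (b : ℕ)) * (-1) ^ (b : ℕ) = 1 := by simp [← mul_pow]
  rw [residue_eq, inv_mul_eq_iff_eq_mul₀ row_ne_zero]
  simp only [Function.comp_apply] at row_split
  linear_combination -(-1) ^ (b : ℕ) * row_split - pairProduct A w * sign_sq

lemma pairProduct_cons_expansion (hA : IsTanhKernel A) {m : ℕ} (hm : Even m) (y : ι)
    {w : Fin (m + 1) → ι} (hne : ∀ i j, i ≠ j → A (w i) (w j) ≠ 0) :
    pairProduct A (Fin.cons y w : Fin (m + 2) → ι) =
      ∑ b : Fin (m + 1), (-1) ^ (b : ℕ) * (A y (w b) * pairProduct A (w ∘ b.succAbove)) := by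
  have card_odd : Odd #(univ : Finset (Fin (m + 1))) := by simpa using hm.add_one
  rw [pairProduct_cons, ← hA.sum_row_mul_residue hne y card_odd, sum_mul]
  refine sum_congr rfl fun b _ => ?_
  rw [mul_assoc, hA.residue_mul_pairProduct hne]
  ring

lemma pairProduct_expansion (hA : IsTanhKernel A) {m : ℕ} (hm : Even m)
    {v : Fin (m + 2) → ι} (hne : ∀ i j, i ≠ j → A (v i) (v j) ≠ 0) (a : Fin (m + 2)) :
    pairProduct A v = (-1) ^ (a : ℕ) * ∑ b : Fin (m + 1), (-1) ^ (b : ℕ) *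
      (A (v a) (v (a.succAbove b)) * pairProduct A (v ∘ a.succAbove ∘ b.succAbove)) := by
  have hne' : ∀ i j, i ≠ j → A ((v ∘ a.succAbove) i) ((v ∘ a.succAbove) j) ≠ 0 :=
    fun i j hij => hne _ _ (a.succAbove_right_injective.ne hij)
  have row := hA.pairProduct_cons_expansion hm (v a) hne'
  rw [pairProduct_cons_succAbove hA.skew] at row
  simp only [Function.comp_apply, Function.comp_assoc] at row
  rw [← row, ← mul_assoc, ← mul_pow]
  simp

theorem antisymmetrization_matchingProduct (hA : IsTanhKernel A) (n : ℕ) (v : Fin (2 * n) → ι) :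
    antisymmetrization (matchingProduct A n) v =
      (2 : K) ^ n * (n.factorial : K) * pairProduct A v := by
  induction n with
  | zero => simp [antisymmetrization, matchingProduct, pairProduct]
  | succ n ih =>
    by_cases hne : ∀ i j, i ≠ j → A (v i) (v j) ≠ 0
    · have row (a : Fin (2 * n + 2)) : (-1) ^ (a : ℕ) * ∑ b : Fin (2 * n + 1), (-1) ^ (b : ℕ) *
          (A (v a) (v (a.succAbove b)) *
            antisymmetrization (matchingProduct A n) (v ∘ a.succAbove ∘ b.succAbove)) =
          (2 : K) ^ n * (n.factorial : K) * pairProduct A v := by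
        rw [hA.pairProduct_expansion (even_two_mul n) hne a]
        simp only [ih, mul_sum]
        exact sum_congr rfl fun b _ => by ring
      rw [antisymmetrization_matchingProduct_succ, sum_congr rfl fun a _ => row a, sum_const,
        card_univ, Fintype.card_fin, nsmul_eq_mul, Nat.factorial_succ]
      push_cast
      ring
    · push Not at hne
      obtain ⟨i, j, hij, h⟩ := hne
      rw [hA.antisymmetrization_matchingProduct_eq_zero hij h,
        pairProduct_eq_zero hA.skew hij h, mul_zero]

end IsTanhKernel

lemma isTanhKernel_sub_div_one_sub_mul {ι K : Type*} [Field K] {x : ι → K}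
    (hx : ∀ i j, i ≠ j → 1 - x i * x j ≠ 0) :
    IsTanhKernel fun i j => (x i - x j) / (1 - x i * x j) := by
  have swap_neg (i j : ι) : (x i - x j) / (1 - x i * x j) = -((x j - x i) / (1 - x j * x i)) := by
    rw [← neg_div, neg_sub, mul_comm (x j)]
  refine ⟨fun i => by rw [sub_self, zero_div], fun i j k => ?_⟩
  rcases eq_or_ne i j with rfl | hij
  · rw [swap_neg k i]
    simp
  rcases eq_or_ne j k with rfl | hjk
  · rw [swap_neg j i]
    simp
  rcases eq_or_ne k i with rfl | hki
  · rw [swap_neg j k]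
    simp
  have hij_ne := hx i j hij
  have hjk_ne := hx j k hjk
  have hki_ne := hx k i hki
  rw [mul_comm (x k)] at hki_ne ⊢
  field_simp
  ring

theorem stembridge_pfaffian_even_general {K : Type*} [Field K] {n : ℕ}
    {A : Matrix (Fin (2 * n)) (Fin (2 * n)) K} (hA : IsTanhKernel A)
    (hc : (2 : K) ^ n * (n.factorial : K) ≠ 0) :
    ∏ i : Fin (2 * n), ∏ j ∈ Ioi i, A i j = pf n A := by
  rw [pf, eq_div_iff hc, mul_comm]
  exact (hA.antisymmetrization_matchingProduct n id).symm

/-- Stembridge's Pfaffian identity (even case):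
`∏_{i<j} (x_i - x_j)/(1 - x_i x_j) = Pf[(x_i - x_j)/(1 - x_i x_j)]`. -/
theorem stembridge_pfaffian_even {K : Type*} [Field K] [CharZero K] (n : ℕ) (hn : 1 ≤ n)
    (x : Fin (2 * n) → K) (hx : ∀ i j, i ≠ j → 1 - x i * x j ≠ 0) :
    (∏ i : Fin (2 * n), ∏ j ∈ Finset.Ioi i, (x i - x j) / (1 - x i * x j))
      = pf n (Matrix.of fun i j => (x i - x j) / (1 - x i * x j)) := by
  have hc : (2 : K) ^ n * (n.factorial : K) ≠ 0 :=
    mul_ne_zero (pow_ne_zero n two_ne_zero) (Nat.cast_ne_zero.2 n.factorial_ne_zero)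
  exact stembridge_pfaffian_even_general (isTanhKernel_sub_div_one_sub_mul hx) hc
end

section
/- Stembridge's Pfaffian identity (odd case): for an odd number m = 2n-1 of variables x_1,...,x_{2n-1} in a field with x_i x_j ≠ 1 for all i < j, one has ∏_{1 ≤ i < j ≤ 2n-1} (x_i - x_j)/(1 - x_i x_j) = Pf of the 2n×2n skew-symmetric matrix whose top-left (2n-1)×(2n-1) block has entries S(x_i,x_j) = (x_i - x_j)/(1 - x_i x_j), whose last column is the all-ones vector (with last entry 0), and whose last row is minus the all-ones vector. -/
/-!
Write `S i j` for `(x i - x j) / (1 - x i * x j)`. The matrix `S` is skew-symmetric and obeys the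
addition law of `tanh`, which in polynomial form is `a + b + c + a * b * c = 0` for `a = S i j`,
`b = S j k`, `c = S k i`. This relation alone forces the unnormalised Pfaffian to be `2 ^ n * n!`
times the product of the entries above the diagonal, over any commutative ring: expanding along a
row reduces the claim to an alternating sum over deleted indices, which satisfies a two-step
recursion. Bordering `S` by ones preserves the relation and the product (it adjoins a point where
`tanh` takes the value `-1`), so the odd case is the even case of the bordered matrix.
-/

open Matrix Finset

section PermCons

variable {N : ℕ}

/-- The permutation of `Fin (N + 1)` that sends `0` to `a` and acts on the other indices as `τ`,
after identifying their images with `Fin N` through `a.succAbove`. -/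
def permCons (a : Fin (N + 1)) (τ : Equiv.Perm (Fin N)) : Equiv.Perm (Fin (N + 1)) :=
  a.cycleRange.symm * Equiv.Perm.decomposeFin.symm (0, τ)

@[simp]
theorem permCons_zero (a : Fin (N + 1)) (τ : Equiv.Perm (Fin N)) : permCons a τ 0 = a := by
  simp [permCons]

@[simp]
theorem permCons_succ (a : Fin (N + 1)) (τ : Equiv.Perm (Fin N)) (k : Fin N) :
    permCons a τ k.succ = a.succAbove (τ k) := by
  simp [permCons, Fin.cycleRange_symm_succ]

theorem sign_permCons (a : Fin (N + 1)) (τ : Equiv.Perm (Fin N)) :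
    Equiv.Perm.sign (permCons a τ) = (-1) ^ (a : ℕ) * Equiv.Perm.sign τ := by
  simp [permCons, Equiv.Perm.sign_mul, Equiv.Perm.sign_symm, Fin.sign_cycleRange]

theorem permCons_bijective :
    Function.Bijective fun p : Fin (N + 1) × Equiv.Perm (Fin N) ↦ permCons p.1 p.2 := by
  refine (Fintype.bijective_iff_injective_and_card _).2 ⟨?_, ?_⟩
  · rintro ⟨a, τ⟩ ⟨b, ρ⟩ (h : permCons a τ = permCons b ρ)
    obtain rfl : a = b := by simpa using DFunLike.congr_fun h 0
    have hτρ : τ = ρ := Equiv.ext fun k ↦ by simpa using DFunLike.congr_fun h k.succ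
    rw [hτρ]
  · simp [Fintype.card_perm, Nat.factorial_succ]

theorem sum_perm_fin_succ {M : Type*} [AddCommMonoid M] (f : Equiv.Perm (Fin (N + 1)) → M) :
    ∑ σ, f σ = ∑ a, ∑ τ, f (permCons a τ) := by
  rw [← Fintype.sum_prod_type']
  exact (permCons_bijective.sum_comp f).symm

end PermCons

theorem submatrix_succ_succAbove_submatrix_succ {m : ℕ} {α : Type*}
    (A : Matrix (Fin (m + 2)) (Fin (m + 2)) α) (a : Fin (m + 1)) :
    (A.submatrix a.succ.succAbove a.succ.succAbove).submatrix Fin.succ Fin.succ =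
      (A.submatrix Fin.succ Fin.succ).submatrix a.succAbove a.succAbove := by
  ext i j; simp

theorem submatrix_succAbove_one_submatrix_succ {m : ℕ} {α : Type*}
    (A : Matrix (Fin (m + 2)) (Fin (m + 2)) α) :
    (A.submatrix (Fin.succAbove 1) (Fin.succAbove 1)).submatrix Fin.succ Fin.succ =
      (A.submatrix Fin.succ Fin.succ).submatrix Fin.succ Fin.succ := by
  simpa using submatrix_succ_succAbove_submatrix_succ A 0

section CommRing

variable {R : Type*} [CommRing R]

/-- The product of the entries of `A` at the consecutive pairs `(s 0, s 1), (s 2, s 3), …`, which is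
the summand attached to `s` in the definition of the Pfaffian. -/
def prodPairs {ι : Type*} {n : ℕ} (A : Matrix ι ι R) (s : Fin (2 * n) → ι) : R :=
  ∏ i : Fin n, A (s ⟨2 * i.1, by lia⟩) (s ⟨2 * i.1 + 1, by lia⟩)

theorem prodPairs_succ {ι : Type*} {n : ℕ} (A : Matrix ι ι R) (s : Fin (2 * n + 2) → ι) :
    prodPairs (n := n + 1) A s = A (s 0) (s 1) * prodPairs A fun k ↦ s k.succ.succ :=
  Fin.prod_univ_succ _

/-- The Pfaffian without its normalising factor `1 / (2 ^ n * n!)`, which makes sense over every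
commutative ring. -/
def pfSum (n : ℕ) (A : Matrix (Fin (2 * n)) (Fin (2 * n)) R) : R :=
  ∑ σ : Equiv.Perm (Fin (2 * n)), ((Equiv.Perm.sign σ : ℤ) : R) * prodPairs A σ

theorem pf_eq_pfSum_div {K : Type*} [Field K] (n : ℕ) (A : Matrix (Fin (2 * n)) (Fin (2 * n)) K) :
    pf n A = pfSum n A / (2 ^ n * n.factorial) :=
  rfl

theorem pfSum_zero (A : Matrix (Fin (2 * 0)) (Fin (2 * 0)) R) : pfSum 0 A = 1 := by
  simp [pfSum, prodPairs]

theorem pfSum_succ (n : ℕ) (A : Matrix (Fin (2 * n + 2)) (Fin (2 * n + 2)) R) :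
    pfSum (n + 1) A = ∑ a : Fin (2 * n + 2), ∑ b : Fin (2 * n + 1),
      (-1) ^ (a : ℕ) * (-1) ^ (b : ℕ) * A a (a.succAbove b) *
        pfSum n (A.submatrix (a.succAbove ∘ b.succAbove) (a.succAbove ∘ b.succAbove)) := by
  refine (sum_perm_fin_succ (N := 2 * n + 1) _).trans (sum_congr rfl fun a _ ↦ ?_)
  refine (sum_perm_fin_succ _).trans (sum_congr rfl fun b _ ↦ ?_)
  rw [pfSum, mul_sum]
  refine sum_congr rfl fun τ _ ↦ ?_
  have hone : permCons a (permCons b τ) 1 = a.succAbove b :=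
    (permCons_succ a _ 0).trans (congrArg _ (permCons_zero b τ))
  rw [prodPairs_succ, permCons_zero, hone]
  simp only [sign_permCons, permCons_succ, prodPairs, submatrix_apply, Function.comp_apply]
  push_cast
  ring

/-- The product of the entries of a square matrix strictly above its diagonal. -/
def prodAboveDiag {N : ℕ} (A : Matrix (Fin N) (Fin N) R) : R :=
  ∏ i, ∏ j ∈ Ioi i, A i j

theorem prodAboveDiag_succ {N : ℕ} (A : Matrix (Fin (N + 1)) (Fin (N + 1)) R) :
    prodAboveDiag A =
      (∏ j : Fin N, A 0 j.succ) * prodAboveDiag (A.submatrix Fin.succ Fin.succ) := by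
  simp [prodAboveDiag, Fin.prod_univ_succ, Fin.prod_Ioi_succ]

theorem prodAboveDiag_eq_mul_submatrix_succAbove {N : ℕ} {A : Matrix (Fin (N + 1)) (Fin (N + 1)) R}
    (hA : Aᵀ = -A) (a : Fin (N + 1)) :
    prodAboveDiag A = (-1) ^ (a : ℕ) * (∏ c, A a (a.succAbove c)) *
      prodAboveDiag (A.submatrix a.succAbove a.succAbove) := by
  induction N with
  | zero =>
    obtain rfl := Fin.fin_one_eq_zero a
    simp [prodAboveDiag]
  | succ N ih =>
    cases a using Fin.cases with
    | zero => simp [prodAboveDiag_succ A]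
    | succ a =>
      have hsub : (A.submatrix Fin.succ Fin.succ)ᵀ = -A.submatrix Fin.succ Fin.succ := by
        rw [transpose_submatrix, hA, submatrix_neg]; rfl
      have hskew : A a.succ 0 = -A 0 a.succ := congr_fun₂ hA 0 a.succ
      have hrow : ∏ j : Fin (N + 1), A 0 j.succ =
          A 0 a.succ * ∏ c, A 0 (a.succAbove c).succ := Fin.prod_univ_succAbove _ a
      rw [prodAboveDiag_succ A, ih hsub a, prodAboveDiag_succ (A.submatrix _ _),
        submatrix_succ_succAbove_submatrix_succ, hrow, Fin.prod_univ_succ]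
      simp only [submatrix_apply, Fin.succ_succAbove_zero, Fin.succ_succAbove_succ, Fin.val_succ,
        hskew]
      ring

/-- A skew-symmetric matrix whose entries obey the addition law of the hyperbolic tangent, such as
`A i j = tanh (u i - u j)`. The law is stated in the polynomial form
`tanh a + tanh b + tanh c + tanh a * tanh b * tanh c = 0` for `a + b + c = 0`, which needs no
denominators. -/
structure IsTanhCocycle {ι : Type*} (A : Matrix ι ι R) : Prop where
  transpose_eq_neg : Aᵀ = -A
  add_add_add_mul_mul : ∀ i j k, A i j + A j k + A k i + A i j * A j k * A k i = 0

namespace IsTanhCocycle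

variable {ι κ : Type*} {A : Matrix ι ι R}

theorem apply_swap (hA : IsTanhCocycle A) (i j : ι) : A j i = -A i j :=
  congr_fun₂ hA.transpose_eq_neg i j

theorem submatrix (hA : IsTanhCocycle A) (f : κ → ι) : IsTanhCocycle (A.submatrix f f) where
  transpose_eq_neg := by rw [transpose_submatrix, hA.transpose_eq_neg, submatrix_neg]; rfl
  add_add_add_mul_mul i j k := hA.add_add_add_mul_mul (f i) (f j) (f k)

theorem sub_eq_mul_one_sub_mul_left (hA : IsTanhCocycle A) (i j k : ι) :
    A i k - A i j = A j k * (1 - A i j * A i k) := by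
  linear_combination -hA.add_add_add_mul_mul i j k + (1 + A i j * A j k) * hA.apply_swap i k

theorem sub_eq_mul_one_sub_mul_right (hA : IsTanhCocycle A) (i j k : ι) :
    A i k - A j k = A i j * (1 - A i k * A j k) := by
  linear_combination -hA.add_add_add_mul_mul i j k + (1 + A i j * A j k) * hA.apply_swap i k

end IsTanhCocycle

/-- The alternating sum, weighted by `w`, of the above-diagonal products of the principal
submatrices obtained by deleting one index. It is what remains of the expansion of a Pfaffian along
a row `w` once the smaller Pfaffians are known to be such products. -/
def deletionSum {m : ℕ} (A : Matrix (Fin (m + 1)) (Fin (m + 1)) R) (w : Fin (m + 1) → R) : R :=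
  ∑ b : Fin (m + 1), (-1) ^ (b : ℕ) * w b *
    prodAboveDiag (A.submatrix b.succAbove b.succAbove)

theorem deletionSum_succ {m : ℕ} (A : Matrix (Fin (m + 2)) (Fin (m + 2)) R) (w : Fin (m + 2) → R) :
    deletionSum A w = w 0 * prodAboveDiag (A.submatrix Fin.succ Fin.succ) -
      deletionSum (A.submatrix Fin.succ Fin.succ)
        fun b ↦ w b.succ * ∏ c : Fin m, A 0 (b.succAbove c).succ := by
  have hminor (b : Fin (m + 1)) :
      prodAboveDiag (A.submatrix b.succ.succAbove b.succ.succAbove) =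
        (∏ c : Fin m, A 0 (b.succAbove c).succ) *
          prodAboveDiag ((A.submatrix Fin.succ Fin.succ).submatrix b.succAbove b.succAbove) := by
    rw [prodAboveDiag_succ, submatrix_succ_succAbove_submatrix_succ]
    simp
  simp only [deletionSum]
  rw [Fin.sum_univ_succ, sub_eq_add_neg, ← sum_neg_distrib]
  simp only [hminor, Fin.val_zero, Fin.succAbove_zero, pow_zero, one_mul, Fin.val_succ]
  exact congrArg _ (sum_congr rfl fun b _ ↦ by ring)

theorem deletionSum_mul_prod_mul_prod {m : ℕ} (B : Matrix (Fin (m + 1)) (Fin (m + 1)) R)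
    (w : Fin (m + 1) → R) {c : R} {u v : Fin (m + 1) → R}
    (huv : ∀ k, u k - v k = c * (1 - u k * v k)) :
    deletionSum B (fun b ↦ w b * (c * ∏ k, u (b.succAbove k)) * ∏ k, v (b.succAbove k)) =
      c * (∏ k, u k) * (∏ k, v k) * deletionSum B w +
        (∏ k, u k) * deletionSum B (fun b ↦ w b * ∏ k, v (b.succAbove k)) -
        (∏ k, v k) * deletionSum B (fun b ↦ w b * ∏ k, u (b.succAbove k)) := by
  simp only [deletionSum, mul_sum, ← sum_add_distrib, ← sum_sub_distrib]
  refine sum_congr rfl fun b _ ↦ ?_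
  rw [Fin.prod_univ_succAbove u b, Fin.prod_univ_succAbove v b]
  linear_combination -((-1) ^ (b : ℕ) * w b * (∏ k, u (b.succAbove k)) *
    (∏ k, v (b.succAbove k)) * prodAboveDiag (B.submatrix b.succAbove b.succAbove)) * huv b

namespace IsTanhCocycle

theorem deletionSum_add_two {m : ℕ} {A : Matrix (Fin (m + 3)) (Fin (m + 3)) R}
    (hA : IsTanhCocycle A) (w : Fin (m + 3) → R) :
    deletionSum A w =
      A 0 1 * (∏ k : Fin (m + 1), A 0 k.succ.succ) * (∏ k : Fin (m + 1), A 1 k.succ.succ) *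
          deletionSum ((A.submatrix Fin.succ Fin.succ).submatrix Fin.succ Fin.succ)
            (fun b ↦ w b.succ.succ) -
        (∏ k : Fin (m + 1), A 0 k.succ.succ) *
          deletionSum (A.submatrix Fin.succ Fin.succ) (fun b ↦ w b.succ) +
        (∏ k : Fin (m + 1), A 1 k.succ.succ) *
          deletionSum (A.submatrix (Fin.succAbove 1) (Fin.succAbove 1))
            (fun b ↦ w (Fin.succAbove 1 b)) := by
  set B := (A.submatrix Fin.succ Fin.succ).submatrix Fin.succ Fin.succ with hB
  have hdel : deletionSum A w =
      w 0 * ((∏ k : Fin (m + 1), A 1 k.succ.succ) * prodAboveDiag B) -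
        (w 1 * (∏ k : Fin (m + 1), A 0 k.succ.succ) * prodAboveDiag B -
          deletionSum B fun b ↦ w b.succ.succ *
            (A 0 1 * ∏ k : Fin m, A 0 (b.succAbove k).succ.succ) *
              ∏ k : Fin m, A 1 (b.succAbove k).succ.succ) := by
    simp only [deletionSum_succ, prodAboveDiag_succ (A.submatrix _ _), ← hB, Fin.prod_univ_succ]
    simp
  have hdel₀ : deletionSum (A.submatrix Fin.succ Fin.succ) (fun b ↦ w b.succ) =
      w 1 * prodAboveDiag B -
        deletionSum B fun b ↦ w b.succ.succ * ∏ k : Fin m, A 1 (b.succAbove k).succ.succ :=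
    deletionSum_succ _ _
  have hdel₁ : deletionSum (A.submatrix (Fin.succAbove 1) (Fin.succAbove 1))
        (fun b ↦ w (Fin.succAbove 1 b)) =
      w 0 * prodAboveDiag B -
        deletionSum B fun b ↦ w b.succ.succ * ∏ k : Fin m, A 0 (b.succAbove k).succ.succ := by
    rw [deletionSum_succ, submatrix_succAbove_one_submatrix_succ]
    simp [hB]
  have hprod := deletionSum_mul_prod_mul_prod B (fun b ↦ w b.succ.succ) (c := A 0 1)
    (u := fun k ↦ A 0 k.succ.succ) (v := fun k ↦ A 1 k.succ.succ)
    fun k ↦ hA.sub_eq_mul_one_sub_mul_right 0 1 k.succ.succ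
  linear_combination hdel + (∏ k : Fin (m + 1), A 0 k.succ.succ) * hdel₀ -
    (∏ k : Fin (m + 1), A 1 k.succ.succ) * hdel₁ + hprod

theorem deletionSum_eq {m : ℕ} {A : Matrix (Fin (m + 1)) (Fin (m + 1)) R} (hA : IsTanhCocycle A)
    {w : Fin (m + 1) → R} (hw : ∀ i j, w j - w i = A i j * (1 - w i * w j)) :
    deletionSum A w = (∏ i, w i - (m % 2 : ℕ)) * prodAboveDiag A := by
  induction m using Nat.twoStepInduction with
  | zero => simp [deletionSum, prodAboveDiag]
  | one =>
    have hrel : w 0 - w 1 = (w 0 * w 1 - 1) * A 0 1 := by linear_combination -hw 0 1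
    simpa [deletionSum, prodAboveDiag, Fin.prod_univ_succ, Fin.sum_univ_succ, Fin.prod_Ioi_succ,
      sub_eq_add_neg] using hrel
  | more m ih ih' =>
    have h₀ := ih' (hA.submatrix Fin.succ) fun i j ↦ hw i.succ j.succ
    have h₁ := ih' (hA.submatrix (Fin.succAbove 1))
      fun i j ↦ hw (Fin.succAbove 1 i) (Fin.succAbove 1 j)
    have h₀₁ := ih ((hA.submatrix Fin.succ).submatrix Fin.succ)
      fun i j ↦ hw i.succ.succ j.succ.succ
    have hrel : w 1 - w 0 = A 0 1 * (1 - w 0 * w 1) := hw 0 1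
    have hP : prodAboveDiag A = A 0 1 * (∏ c : Fin (m + 1), A 0 c.succ.succ) *
        prodAboveDiag (A.submatrix Fin.succ Fin.succ) := by
      rw [prodAboveDiag_succ, Fin.prod_univ_succ]; rfl
    have hP₀ : prodAboveDiag (A.submatrix Fin.succ Fin.succ) =
        (∏ c : Fin (m + 1), A 1 c.succ.succ) *
          prodAboveDiag ((A.submatrix Fin.succ Fin.succ).submatrix Fin.succ Fin.succ) :=
      prodAboveDiag_succ _
    have hP₁ : prodAboveDiag (A.submatrix (Fin.succAbove 1) (Fin.succAbove 1)) =
        (∏ c : Fin (m + 1), A 0 c.succ.succ) *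
          prodAboveDiag ((A.submatrix Fin.succ Fin.succ).submatrix Fin.succ Fin.succ) := by
      rw [prodAboveDiag_succ, submatrix_succAbove_one_submatrix_succ]
      simp
    have hw₀ : ∏ i : Fin (m + 2), w i.succ = w 1 * ∏ i : Fin (m + 1), w i.succ.succ :=
      Fin.prod_univ_succ _
    have hw₁ : ∏ i, w (Fin.succAbove 1 i) = w 0 * ∏ i : Fin (m + 1), w i.succ.succ := by
      simp [Fin.prod_univ_succ (n := m + 1)]
    rw [hA.deletionSum_add_two, h₀, h₁, h₀₁, Fin.prod_univ_succ w, hw₀, hw₁, hP, hP₁, hP₀,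
      Nat.add_mod_right]
    linear_combination -((∏ c : Fin (m + 1), A 0 c.succ.succ) *
      (∏ c : Fin (m + 1), A 1 c.succ.succ) * (∏ i : Fin (m + 1), w i.succ.succ) *
      prodAboveDiag ((A.submatrix Fin.succ Fin.succ).submatrix Fin.succ Fin.succ)) * hrel

theorem pfSum_eq {n : ℕ} {A : Matrix (Fin (2 * n)) (Fin (2 * n)) R} (hA : IsTanhCocycle A) :
    pfSum n A = 2 ^ n * n.factorial * prodAboveDiag A := by
  induction n with
  | zero => simp [pfSum_zero, prodAboveDiag]
  | succ n ih =>
    have hrow (a : Fin (2 * n + 2)) :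
        ∑ b : Fin (2 * n + 1), (-1) ^ (a : ℕ) * (-1) ^ (b : ℕ) * A a (a.succAbove b) *
          pfSum n (A.submatrix (a.succAbove ∘ b.succAbove) (a.succAbove ∘ b.succAbove)) =
        2 ^ n * n.factorial * prodAboveDiag (N := 2 * n + 2) A := by
      have hminor := hA.submatrix a.succAbove
      have hsum := hminor.deletionSum_eq (w := fun b ↦ A a (a.succAbove b))
        fun i j ↦ hA.sub_eq_mul_one_sub_mul_left a (a.succAbove i) (a.succAbove j)
      rw [prodAboveDiag_eq_mul_submatrix_succAbove hA.transpose_eq_neg a]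
      simp only [ih (hA.submatrix _)]
      have hexpand : ∑ b : Fin (2 * n + 1), (-1) ^ (a : ℕ) * (-1) ^ (b : ℕ) * A a (a.succAbove b) *
          (2 ^ n * n.factorial *
            prodAboveDiag (A.submatrix (a.succAbove ∘ b.succAbove) (a.succAbove ∘ b.succAbove))) =
          2 ^ n * n.factorial * ((-1) ^ (a : ℕ) * deletionSum (A.submatrix a.succAbove a.succAbove)
            fun b ↦ A a (a.succAbove b)) := by
        simp only [deletionSum, mul_sum, submatrix_submatrix]
        exact sum_congr rfl fun b _ ↦ by ring
      rw [hexpand, hsum, Nat.mul_mod_right]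
      simp [mul_assoc]
    calc pfSum (n + 1) A
        = ∑ _a : Fin (2 * n + 2), 2 ^ n * n.factorial * prodAboveDiag (N := 2 * n + 2) A :=
          (pfSum_succ n A).trans (sum_congr rfl fun a _ ↦ hrow a)
      _ = (2 * n + 2) * (2 ^ n * n.factorial * prodAboveDiag (N := 2 * n + 2) A) := by simp
      _ = 2 ^ (n + 1) * (n + 1).factorial * prodAboveDiag (N := 2 * n + 2) A := by
          push_cast [Nat.factorial_succ]; ring

theorem pf_eq_prodAboveDiag {K : Type*} [Field K] {n : ℕ} {A : Matrix (Fin (2 * n)) (Fin (2 * n)) K}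
    (hA : IsTanhCocycle A) (hn : (2 : K) ^ n * n.factorial ≠ 0) : pf n A = prodAboveDiag A := by
  rw [pf_eq_pfSum_div, hA.pfSum_eq, mul_div_cancel_left₀ _ hn]

end IsTanhCocycle

/-- The skew-symmetric extension of `A` by a last column of ones and a last row of minus ones. -/
def border {m : ℕ} (A : Matrix (Fin m) (Fin m) R) : Matrix (Fin (m + 1)) (Fin (m + 1)) R :=
  of fun i j ↦ Fin.lastCases (Fin.lastCases 0 (fun _ ↦ -1) j)
    (fun i ↦ Fin.lastCases 1 (fun j ↦ A i j) j) i

section border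

variable {m : ℕ} (A : Matrix (Fin m) (Fin m) R)

@[simp]
theorem border_castSucc_castSucc (i j : Fin m) : border A i.castSucc j.castSucc = A i j := by
  simp [border]

@[simp]
theorem border_castSucc_last (i : Fin m) : border A i.castSucc (Fin.last m) = 1 := by
  simp [border]

@[simp]
theorem border_last_castSucc (j : Fin m) : border A (Fin.last m) j.castSucc = -1 := by
  simp [border]

@[simp]
theorem border_last_last : border A (Fin.last m) (Fin.last m) = 0 := by
  simp [border]

theorem IsTanhCocycle.border {A : Matrix (Fin m) (Fin m) R} (hA : IsTanhCocycle A) :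
    IsTanhCocycle (border A) where
  transpose_eq_neg := by
    ext i j
    cases i using Fin.lastCases with
    | last => cases j using Fin.lastCases <;> simp
    | cast i =>
      cases j using Fin.lastCases with
      | last => simp
      | cast j => simpa using hA.apply_swap i j
  add_add_add_mul_mul i j k := by
    cases i using Fin.lastCases with
    | last =>
      cases j using Fin.lastCases <;> cases k using Fin.lastCases <;> simp
    | cast i =>
      cases j using Fin.lastCases with
      | last => cases k using Fin.lastCases <;> simp
      | cast j =>
        cases k using Fin.lastCases with
        | last => simp
        | cast k => simpa using hA.add_add_add_mul_mul i j k

theorem prodAboveDiag_border : prodAboveDiag (border A) = prodAboveDiag A := by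
  induction m with
  | zero => simp [prodAboveDiag]
  | succ m ih =>
    have hsub : (border A).submatrix Fin.succ Fin.succ =
        border (A.submatrix Fin.succ Fin.succ) := by
      ext i j
      cases i using Fin.lastCases <;> cases j using Fin.lastCases <;>
        simp only [submatrix_apply, ← Fin.castSucc_succ, Fin.succ_last, border_last_last,
          border_last_castSucc, border_castSucc_last, border_castSucc_castSucc]
    rw [prodAboveDiag_succ, hsub, ih, prodAboveDiag_succ A, Fin.prod_univ_castSucc]
    have hlast : border A 0 (Fin.last m).succ = 1 := border_castSucc_last A 0
    have hcast (j : Fin m) : border A 0 j.castSucc.succ = A 0 j.succ :=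
      border_castSucc_castSucc A 0 j.succ
    simp only [hlast, hcast, mul_one]

end border

end CommRing

section Field

variable {K : Type*} [Field K]

/-- The matrix with entries `S (x i, x j)`, where `S (x, y) = (x - y) / (1 - x * y)` is the
subtraction law of `tanh`. -/
def stembridgeMatrix {ι : Type*} (x : ι → K) : Matrix ι ι K :=
  of fun i j ↦ (x i - x j) / (1 - x i * x j)

theorem isTanhCocycle_stembridgeMatrix {ι : Type*} {x : ι → K}
    (hx : ∀ i j, i ≠ j → 1 - x i * x j ≠ 0) : IsTanhCocycle (stembridgeMatrix x) := by
  have hskew (i j : ι) : stembridgeMatrix x j i = -stembridgeMatrix x i j := by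
    simp [stembridgeMatrix, mul_comm (x j), ← neg_div]
  refine ⟨Matrix.ext hskew, fun i j k ↦ ?_⟩
  have hdiag (i : ι) : stembridgeMatrix x i i = 0 := by simp [stembridgeMatrix]
  rcases eq_or_ne i j with rfl | hij
  · simp [hdiag, hskew i k]
  rcases eq_or_ne j k with rfl | hjk
  · simp [hdiag, hskew i j]
  rcases eq_or_ne k i with rfl | hki
  · simp [hdiag, hskew k j]
  have h₁ := hx i j hij
  have h₂ := hx j k hjk
  have h₃ := hx k i hki
  simp only [stembridgeMatrix, of_apply]
  rw [mul_comm] at h₃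
  field_simp
  ring

end Field

theorem stembridge_pfaffian_odd_general {K : Type*} [Field K] (n : ℕ) (hn : 1 ≤ n)
    (hK : (2 : K) ^ n * (n.factorial : K) ≠ 0)
    (x : Fin (2 * n - 1) → K) (hx : ∀ i j, i ≠ j → 1 - x i * x j ≠ 0) :
    (∏ i : Fin (2 * n - 1), ∏ j ∈ Finset.Ioi i, (x i - x j) / (1 - x i * x j))
      = pf n (Matrix.of fun i j : Fin (2 * n) =>
          if hi : i.1 < 2 * n - 1 then
            (if hj : j.1 < 2 * n - 1 then
              (x ⟨i.1, hi⟩ - x ⟨j.1, hj⟩) / (1 - x ⟨i.1, hi⟩ * x ⟨j.1, hj⟩)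
            else 1)
          else (if j.1 < 2 * n - 1 then -1 else 0)) := by
  obtain ⟨n, rfl⟩ := Nat.exists_eq_add_of_le' hn
  change prodAboveDiag (stembridgeMatrix x) = _
  rw [← prodAboveDiag_border,
    ← (isTanhCocycle_stembridgeMatrix hx).border.pf_eq_prodAboveDiag (n := n + 1) hK]
  refine congrArg (pf (n + 1)) (Matrix.ext fun i j ↦ ?_)
  cases i using Fin.lastCases <;> cases j using Fin.lastCases <;> simp [stembridgeMatrix]

/-- Stembridge's Pfaffian identity (odd case): for `2n-1` variables,
`∏_{i<j} (x_i - x_j)/(1 - x_i x_j)` equals the Pfaffian of the `2n × 2n` matrix whose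
top-left `(2n-1) × (2n-1)` block has entries `S(x_i, x_j)`, whose last column is the
all-ones vector (with last entry `0`), and whose last row is minus the all-ones vector. -/
theorem stembridge_pfaffian_odd {K : Type*} [Field K] [CharZero K] (n : ℕ) (hn : 1 ≤ n)
    (x : Fin (2 * n - 1) → K) (hx : ∀ i j, i ≠ j → 1 - x i * x j ≠ 0) :
    (∏ i : Fin (2 * n - 1), ∏ j ∈ Finset.Ioi i, (x i - x j) / (1 - x i * x j))
      = pf n (Matrix.of fun i j : Fin (2 * n) =>
          if hi : i.1 < 2 * n - 1 then
            (if hj : j.1 < 2 * n - 1 then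
              (x ⟨i.1, hi⟩ - x ⟨j.1, hj⟩) / (1 - x ⟨i.1, hi⟩ * x ⟨j.1, hj⟩)
            else 1)
          else (if j.1 < 2 * n - 1 then -1 else 0)) :=
  stembridge_pfaffian_odd_general n hn
    (mul_ne_zero (pow_ne_zero n two_ne_zero) (Nat.cast_ne_zero.2 n.factorial_ne_zero)) x hx
end

section
/- Double summation identity for the TASEP kernel against Pochhammer polynomials: define Θ_i(x) = binom(x+i-2, x-1) for x ≥ 1 and i ≥ 1, and Q_{k,ℓ}(x,y) = α² (1/2πi)² ∮∮ [(u-w)/(1-u-w)]·[w^{k-x} e^{t(w-1)}/((w-α)(w-1)^k)]·[u^{ℓ-y} e^{t(u-1)}/((u-α)(u-1)^ℓ)] du dw with both contours circles of radius R > 1 around the origin enclosing 1, α, 1-α. Then for all i, j ≥ 1, ∑_{x=1}^{∞} ∑_{y=1}^{∞} Θ_i(x) Q_{1,1}(x,y) Θ_j(y) = Q_{i+1,j+1}(1,1), with both iterated series converging absolutely. -/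
/-!
On `|w| = R > 1` the negative binomial series `∑ Θ_i(x) w^{1-x} = (1 - w⁻¹)^{-i}` converges
absolutely, and multiplying the integrand of `Q_{k,ℓ}(x,y)` by `(1 - w⁻¹)^{-i} (1 - u⁻¹)^{-j}`
turns it into that of `Q_{k+i,ℓ+j}(x,y)`. The sum may be taken inside the double integral by
dominated convergence once the integrand is known to be integrable on the torus `|w| = |u| = R`.

Integrability is not automatic, since `1 - u - w` vanishes at two points of that torus. The
identity `|1 - w|² - |u|² = 1 - 2 Re w` bounds `|1/(2R) - cos (arg w)|` by a multiple of
`|1 - u - w|`, and likewise for `u`; the geometric mean of the two bounds dominates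
`|1 - u - w|⁻¹` by a multiple of `|1/(2R) - cos (arg w)|^{-1/2} |1/(2R) - cos (arg u)|^{-1/2}`,
a product of integrable functions of one variable because `1/(2R) < 1`.
-/

open Complex

/-- `Θ_i(x) = C(x + i - 2, x - 1)` for positive integers `x`, `i`. -/
noncomputable def ThetaBin (i x : ℕ) : ℝ := (Nat.choose (x + i - 2) (x - 1) : ℝ)

/-- The TASEP double-contour kernel `Q_{k,ℓ}(x,y)`, with both contours the circle of
radius `R` around the origin. -/
noncomputable def Qker (α t R : ℝ) (k ℓ : ℕ) (x y : ℤ) : ℂ :=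
  (α : ℂ) ^ 2 * ((2 * Real.pi * Complex.I)⁻¹) ^ 2 *
    ∮ w in C(0, R), ∮ u in C(0, R),
      ((u - w) / (1 - u - w)) *
        (w ^ ((k : ℤ) - x) * Complex.exp ((t : ℂ) * (w - 1)) /
          ((w - (α : ℂ)) * (w - 1) ^ k)) *
        (u ^ ((ℓ : ℤ) - y) * Complex.exp ((t : ℂ) * (u - 1)) /
          ((u - (α : ℂ)) * (u - 1) ^ ℓ))

open MeasureTheory Set

lemma intervalIntegrable_abs_rpow {r : ℝ} (hr : -1 < r) (a b : ℝ) :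
    IntervalIntegrable (fun x : ℝ ↦ |x| ^ r) volume a b := by
  simpa [Complex.norm_cpow_real] using
    (intervalIntegral.intervalIntegrable_cpow' (a := a) (b := b) (r := r) (by simpa)).norm

lemma intervalIntegrable_abs_sin_rpow {r : ℝ} (hr : -1 < r) (a b : ℝ) :
    IntervalIntegrable (fun x : ℝ ↦ |Real.sin x| ^ r) volume a b := by
  rcases le_or_gt 0 r with hr₀ | hr₀
  · exact (Real.continuous_sin.abs.rpow_const fun _ ↦ .inr hr₀).intervalIntegrable a b
  have hper : Function.Periodic (fun x : ℝ ↦ |Real.sin x| ^ r) Real.pi := fun x ↦ by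
    simp only [Real.sin_add_pi, abs_neg]
  refine hper.intervalIntegrable Real.pi_ne_zero (t := -(Real.pi / 2)) ?_ a b
  refine ((intervalIntegrable_abs_rpow hr _ _).const_mul ((2 / Real.pi) ^ r)).mono_fun
    (Measurable.aestronglyMeasurable (by fun_prop))
    ((ae_restrict_iff' measurableSet_uIoc).2 (.of_forall fun x hx ↦ ?_))
  rw [uIoc_of_le (by linarith [Real.pi_pos])] at hx
  have hle : 2 / Real.pi * |x| ≤ |Real.sin x| :=
    Real.mul_abs_le_abs_sin (abs_le.2 ⟨hx.1.le, by linarith [hx.2]⟩)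
  rcases eq_or_ne x 0 with rfl | hx₀
  · simp [hr₀.ne]
  · beta_reduce
    rw [Real.norm_of_nonneg (by positivity), Real.norm_of_nonneg (by positivity),
      ← Real.mul_rpow (by positivity) (by positivity)]
    exact Real.rpow_le_rpow_of_nonpos (by positivity) hle hr₀.le

lemma intervalIntegrable_inv_sqrt_abs_sin (a b : ℝ) :
    IntervalIntegrable (fun x : ℝ ↦ (√|Real.sin x|)⁻¹) volume a b := by
  simpa only [Real.sqrt_eq_rpow, ← Real.rpow_neg (abs_nonneg _)] using
    intervalIntegrable_abs_sin_rpow (r := -(1 / 2)) (by norm_num) a b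

lemma sqrt_abs_sin_mul_inv_sqrt_abs_cos_sub_cos_le (x y : ℝ) :
    √|Real.sin x| * (√|Real.cos x - Real.cos y|)⁻¹ ≤
      (√|Real.sin ((x + y) / 2)|)⁻¹ + (√|Real.sin ((x - y) / 2)|)⁻¹ := by
  set p := |Real.sin ((x + y) / 2)| with hp
  set q := |Real.sin ((x - y) / 2)| with hq
  have hsin : |Real.sin x| ≤ p + q := by
    calc |Real.sin x| = |Real.sin ((x + y) / 2 + (x - y) / 2)| := by ring_nf
      _ ≤ p * 1 + 1 * q := by
        rw [Real.sin_add, hp, hq]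
        refine (abs_add_le _ _).trans ?_
        rw [abs_mul, abs_mul]
        gcongr <;> exact Real.abs_cos_le_one _
      _ = p + q := by ring
  have hcos : |Real.cos x - Real.cos y| = 2 * p * q := by
    rw [Real.cos_sub_cos, abs_mul, abs_mul, abs_neg, abs_two]
  rcases (show 0 ≤ p from abs_nonneg _).eq_or_lt with hp₀ | hp₀
  · rw [hcos, ← hp₀]; simp
  rcases (show 0 ≤ q from abs_nonneg _).eq_or_lt with hq₀ | hq₀
  · rw [hcos, ← hq₀]; simp
  have hsqrt : √(p + q) ≤ √p + √q := by
    simpa only [Real.sqrt_eq_rpow] using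
      Real.rpow_add_le_add_rpow hp₀.le hq₀.le (by norm_num) (by norm_num : (1 / 2 : ℝ) ≤ 1)
  calc √|Real.sin x| * (√|Real.cos x - Real.cos y|)⁻¹
      ≤ (√p + √q) * (√p * √q)⁻¹ := by
        rw [hcos, ← Real.sqrt_mul hp₀.le]
        gcongr
        · exact (Real.sqrt_le_sqrt hsin).trans hsqrt
        · nlinarith [mul_pos hp₀ hq₀]
    _ = (√p)⁻¹ + (√q)⁻¹ := by
        have : 0 < √p := Real.sqrt_pos.2 hp₀
        have : 0 < √q := Real.sqrt_pos.2 hq₀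
        field_simp; ring

lemma intervalIntegrable_inv_sqrt_abs_sub_cos {c : ℝ} (hc : |c| < 1) (a b : ℝ) :
    IntervalIntegrable (fun θ : ℝ ↦ (√|c - Real.cos θ|)⁻¹) volume a b := by
  obtain ⟨hc₁, hc₂⟩ := abs_lt.1 hc
  set x := Real.arccos c
  have hcos : Real.cos x = c := Real.cos_arccos hc₁.le hc₂.le
  have hsin : 0 < √|Real.sin x| := by
    rw [Real.sin_arccos, Real.sqrt_pos, abs_pos, Real.sqrt_ne_zero']
    nlinarith
  have hadd : IntervalIntegrable (fun θ ↦ (√|Real.sin ((x + θ) / 2)|)⁻¹) volume a b := by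
    simpa [div_eq_inv_mul] using
      ((intervalIntegrable_inv_sqrt_abs_sin ((x + a) / 2) ((x + b) / 2)).comp_mul_left
        (c := 2⁻¹)).comp_add_left x
  have hsub : IntervalIntegrable (fun θ ↦ (√|Real.sin ((x - θ) / 2)|)⁻¹) volume a b := by
    simpa [div_eq_inv_mul] using
      ((intervalIntegrable_inv_sqrt_abs_sin ((x - a) / 2) ((x - b) / 2)).comp_mul_left
        (c := 2⁻¹)).comp_sub_left x
  refine ((hadd.add hsub).const_mul (√|Real.sin x|)⁻¹).mono_fun
    (by fun_prop) (.of_forall fun θ ↦ ?_)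
  beta_reduce
  rw [Real.norm_of_nonneg (by positivity), Real.norm_of_nonneg (by positivity),
    ← div_eq_inv_mul, le_div_iff₀' hsin, ← hcos]
  exact sqrt_abs_sin_mul_inv_sqrt_abs_cos_sub_cos_le x θ

lemma ae_cos_ne (c : ℝ) : ∀ᵐ θ : ℝ, Real.cos θ ≠ c := by
  suffices h : {θ | Real.cos θ = c}.Countable from h.ae_notMem volume
  by_cases hc : ∃ x, Real.cos x = c
  · obtain ⟨x, rfl⟩ := hc
    refine ((countable_range fun k : ℤ ↦ 2 * k * Real.pi + x).union
      (countable_range fun k : ℤ ↦ 2 * k * Real.pi - x)).mono fun θ hθ ↦ ?_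
    obtain ⟨k, hk | hk⟩ := Real.cos_eq_cos_iff.1 (mem_ofPred.1 hθ).symm
    exacts [.inl ⟨k, hk.symm⟩, .inr ⟨k, hk.symm⟩]
  · simp [not_exists.1 hc]

lemma abs_one_sub_two_mul_re_le {u w : ℂ} (h : ‖u‖ = ‖w‖) :
    |1 - 2 * w.re| ≤ (2 * ‖w‖ + 1) * ‖1 - u - w‖ := by
  have hre : 1 - 2 * w.re = (‖1 - w‖ + ‖w‖) * (‖1 - w‖ - ‖u‖) := by
    have hsq : ‖1 - w‖ ^ 2 - ‖w‖ ^ 2 = 1 - 2 * w.re := by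
      simp only [← normSq_eq_norm_sq, normSq_apply, sub_re, sub_im, one_re, one_im]; ring
    rw [h, ← hsq]; ring
  rw [hre, abs_mul, abs_of_nonneg (by positivity)]
  refine mul_le_mul ?_ ?_ (abs_nonneg _) (by positivity)
  · linarith [norm_one (α := ℂ) ▸ norm_sub_le 1 w]
  · simpa [sub_right_comm] using abs_norm_sub_norm_le (1 - w) u

lemma torusIntegral_congr {n : ℕ} {E : Type*} [NormedAddCommGroup E] [NormedSpace ℂ E]
    {f g : (Fin n → ℂ) → E} {c : Fin n → ℂ} {R : Fin n → ℝ}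
    (h : ∀ θ, f (torusMap c R θ) = g (torusMap c R θ)) :
    (∯ z in T(c, R), f z) = ∯ z in T(c, R), g z := by
  simp only [torusIntegral, h]

lemma torusIntegral_fin_two {E : Type*} [NormedAddCommGroup E] [NormedSpace ℂ E]
    {f : (Fin 2 → ℂ) → E} {c : Fin 2 → ℂ} {R : Fin 2 → ℝ} (hf : TorusIntegrable f c R) :
    (∯ z in T(c, R), f z) = ∮ w in C(c 0, R 0), ∮ u in C(c 1, R 1), f ![w, u] := by
  rw [torusIntegral_succ hf]
  congr! with w
  rw [torusIntegral_dim1]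
  congr! with u i
  exact (Matrix.cons_val_fin_one u _ i).symm

lemma torusIntegrable_mul_continuous {n : ℕ} {f g : (Fin n → ℂ) → ℂ} {c : Fin n → ℂ}
    {R : Fin n → ℝ} (hf : TorusIntegrable f c R) (hg : Continuous fun θ ↦ g (torusMap c R θ)) :
    TorusIntegrable (fun z ↦ f z * g z) c R :=
  IntegrableOn.mul_continuousOn hf hg.continuousOn isCompact_Icc

lemma hasSum_torusIntegral_mul {ι : Type*} [Countable ι] {n : ℕ} {c : Fin n → ℂ} {R : Fin n → ℝ}
    {f : (Fin n → ℂ) → ℂ} {g : ι → (Fin n → ℂ) → ℂ} {s : (Fin n → ℂ) → ℂ} {C : ι → ℝ}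
    (hf : TorusIntegrable f c R) (hg : ∀ q, Continuous fun θ ↦ g q (torusMap c R θ))
    (hgC : ∀ q θ, ‖g q (torusMap c R θ)‖ ≤ C q) (hC : Summable C)
    (hs : ∀ θ, HasSum (fun q ↦ g q (torusMap c R θ)) (s (torusMap c R θ))) :
    HasSum (fun q ↦ ∯ z in T(c, R), f z * g q z) (∯ z in T(c, R), f z * s z) := by
  refine hasSum_integral_of_dominated_convergence
    (fun q θ ↦ C q * ‖(∏ i, R i * exp (θ i * I) * I : ℂ) • f (torusMap c R θ)‖)
    (fun q ↦ (torusIntegrable_mul_continuous hf (hg q)).function_integrable.1)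
    (fun q ↦ .of_forall fun θ ↦ ?_) (.of_forall fun θ ↦ hC.mul_right _) ?_
    (.of_forall fun θ ↦ ?_)
  · rw [smul_eq_mul, smul_eq_mul, ← mul_assoc, norm_mul, mul_comm]
    gcongr
    exact hgC q θ
  · simpa only [tsum_mul_right] using hf.function_integrable.norm.const_mul _
  · simpa only [smul_eq_mul, ← mul_assoc] using (hs θ).mul_left _

lemma ae_norm_inv_one_sub_sub_circleMap_le {R : ℝ} (hR : 0 < R) :
    ∀ᵐ θ : Fin 2 → ℝ, ‖(1 - circleMap 0 R (θ 1) - circleMap 0 R (θ 0))⁻¹‖ ≤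
      (2 * R + 1) / (2 * R) * ∏ i, (√|1 / (2 * R) - Real.cos (θ i)|)⁻¹ := by
  have hcos (i : Fin 2) : ∀ᵐ θ : Fin 2 → ℝ, Real.cos (θ i) ≠ 1 / (2 * R) := by
    rw [volume_pi]
    exact (Measure.quasiMeasurePreserving_eval (fun _ : Fin 2 ↦ (volume : Measure ℝ)) i).ae
      (ae_cos_ne _)
  filter_upwards [hcos 0, hcos 1] with θ h₀ h₁
  set D := ‖1 - circleMap 0 R (θ 1) - circleMap 0 R (θ 0)‖
  have hbound {φ ψ : ℝ} (hD : ‖1 - circleMap 0 R ψ - circleMap 0 R φ‖ = D) :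
      |1 / (2 * R) - Real.cos φ| ≤ (2 * R + 1) / (2 * R) * D := by
    have h := abs_one_sub_two_mul_re_le (u := circleMap 0 R ψ) (w := circleMap 0 R φ) (by simp)
    have hre : 1 - 2 * (circleMap 0 R φ).re = 2 * R * (1 / (2 * R) - Real.cos φ) := by
      rw [circleMap, zero_add, re_ofReal_mul, exp_ofReal_mul_I_re]
      field_simp
    rw [hre, hD, norm_circleMap_zero, abs_mul, abs_of_pos hR, abs_of_pos (by positivity)] at h
    rw [div_mul_eq_mul_div, le_div_iff₀' (by positivity)]
    exact h
  have hφ := hbound (φ := θ 0) rfl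
  have hψ := hbound (φ := θ 1) (ψ := θ 0) (by rw [sub_right_comm])
  have h₀' := abs_pos.2 (sub_ne_zero.2 h₀.symm)
  have : 0 < |1 / (2 * R) - Real.cos (θ 1)| := abs_pos.2 (sub_ne_zero.2 h₁.symm)
  have hDpos : 0 < D := pos_of_mul_pos_right (h₀'.trans_le hφ) (by positivity)
  rw [norm_inv, Fin.prod_univ_two, ← mul_inv, ← div_eq_mul_inv, le_div_iff₀ (by positivity),
    inv_mul_le_iff₀ hDpos, mul_comm D]
  calc √|1 / (2 * R) - Real.cos (θ 0)| * √|1 / (2 * R) - Real.cos (θ 1)|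
      ≤ √((2 * R + 1) / (2 * R) * D) * √((2 * R + 1) / (2 * R) * D) := by gcongr
    _ = (2 * R + 1) / (2 * R) * D := Real.mul_self_sqrt (by positivity)

lemma torusIntegrable_inv_one_sub_sub {R : ℝ} (hR : 1 / 2 < R) :
    TorusIntegrable (fun z : Fin 2 → ℂ ↦ (1 - z 1 - z 0)⁻¹) 0 fun _ ↦ R := by
  have hR₀ : 0 < R := by linarith
  have hcos : |1 / (2 * R)| < 1 := by
    rw [abs_of_pos (by positivity), div_lt_one (by positivity)]; linarith
  have hprod : IntegrableOn (fun θ : Fin 2 → ℝ ↦ ∏ i, (√|1 / (2 * R) - Real.cos (θ i)|)⁻¹)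
      (Icc 0 fun _ ↦ 2 * Real.pi) := by
    rw [IntegrableOn, ← pi_univ_Icc, volume_pi, Measure.restrict_pi_pi]
    exact .fintype_prod fun _ ↦ (intervalIntegrable_iff_integrableOn_Icc_of_le
      Real.two_pi_pos.le).1 (intervalIntegrable_inv_sqrt_abs_sub_cos hcos _ _)
  refine (hprod.const_mul _).mono' (Measurable.aestronglyMeasurable ?_)
    (ae_restrict_of_ae (ae_norm_inv_one_sub_sub_circleMap_le hR₀))
  simp only [torusMap]
  fun_prop

lemma hasSum_thetaBin_mul_inv_pow {i : ℕ} (hi : 1 ≤ i) {w : ℂ} (hw : 1 < ‖w‖) :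
    HasSum (fun m : ℕ ↦ (ThetaBin i (m + 1) : ℂ) * w⁻¹ ^ m) ((1 - w⁻¹) ^ i)⁻¹ := by
  obtain ⟨k, rfl⟩ := Nat.exists_eq_add_of_le' hi
  have hw' : ‖w⁻¹‖ < 1 := by simpa using inv_lt_one_of_one_lt₀ hw
  have hbinom (m : ℕ) : (ThetaBin (k + 1) (m + 1) : ℂ) = ((m + k).choose k : ℂ) := by
    rw [ThetaBin, show m + 1 + (k + 1) - 2 = m + k by lia, Nat.add_sub_cancel,
      Nat.choose_symm_add, ofReal_natCast]
  simpa only [hbinom, one_div] using hasSum_choose_mul_geometric_of_norm_lt_one k hw'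

lemma hasSum_thetaBin_mul_thetaBin_mul_inv_pow {i j : ℕ} (hi : 1 ≤ i) (hj : 1 ≤ j) {w u : ℂ}
    (hw : 1 < ‖w‖) (hu : 1 < ‖u‖) :
    HasSum (fun p : ℕ × ℕ ↦ (ThetaBin i (p.1 + 1) : ℂ) * ThetaBin j (p.2 + 1) *
      (w⁻¹ ^ p.1 * u⁻¹ ^ p.2)) (((1 - w⁻¹) ^ i)⁻¹ * ((1 - u⁻¹) ^ j)⁻¹) := by
  have h₀ := hasSum_thetaBin_mul_inv_pow hi hw
  have h₁ := hasSum_thetaBin_mul_inv_pow hj hu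
  have hsummable := summable_mul_of_summable_norm h₀.summable.norm h₁.summable.norm
  exact (h₀.mul h₁ hsummable).congr_fun fun p ↦ mul_mul_mul_comm ..

lemma hasSum_torusIntegral_mul_thetaBin {f : (Fin 2 → ℂ) → ℂ} {R : ℝ} (hR : 1 < R)
    (hf : TorusIntegrable f 0 fun _ ↦ R) {i j : ℕ} (hi : 1 ≤ i) (hj : 1 ≤ j) :
    HasSum (fun p : ℕ × ℕ ↦ (ThetaBin i (p.1 + 1) : ℂ) * ThetaBin j (p.2 + 1) *
        ∯ z in T(0, fun _ ↦ R), f z * ((z 0)⁻¹ ^ p.1 * (z 1)⁻¹ ^ p.2))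
      (∯ z in T(0, fun _ ↦ R), f z * (((1 - (z 0)⁻¹) ^ i)⁻¹ * ((1 - (z 1)⁻¹) ^ j)⁻¹)) := by
  have hnorm (θ : Fin 2 → ℝ) (a : Fin 2) : ‖torusMap 0 (fun _ ↦ R) θ a‖ = R :=
    (norm_circleMap_zero R (θ a)).trans (abs_of_pos (by linarith))
  have hcont (a : Fin 2) : Continuous fun θ ↦ (torusMap 0 (fun _ ↦ R) θ a)⁻¹ :=
    ((continuous_circleMap 0 R).comp (continuous_apply a)).inv₀ fun _ ↦
      circleMap_ne_center (by linarith)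
  have hseries (θ : Fin 2 → ℝ) := hasSum_thetaBin_mul_thetaBin_mul_inv_pow hi hj
    (hR.trans_eq (hnorm θ 0).symm) (hR.trans_eq (hnorm θ 1).symm)
  have hsum := hasSum_torusIntegral_mul hf
    (g := fun (p : ℕ × ℕ) z ↦ ThetaBin i (p.1 + 1) * ThetaBin j (p.2 + 1) *
      ((z 0)⁻¹ ^ p.1 * (z 1)⁻¹ ^ p.2))
    (C := fun p ↦ ‖(ThetaBin i (p.1 + 1) : ℂ)‖ * ‖(ThetaBin j (p.2 + 1) : ℂ)‖ *
      (R⁻¹ ^ p.1 * R⁻¹ ^ p.2))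
    (s := fun z ↦ ((1 - (z 0)⁻¹) ^ i)⁻¹ * ((1 - (z 1)⁻¹) ^ j)⁻¹)
    (fun p ↦ (((hcont 0).pow _).mul ((hcont 1).pow _)).const_mul _)
    (fun p θ ↦ by simp only [norm_mul, norm_pow, norm_inv, hnorm]; exact le_rfl)
    (by simpa only [norm_mul, norm_pow, norm_inv, hnorm] using (hseries 0).summable.norm)
    hseries
  simpa only [mul_left_comm (f _), torusIntegral_const_mul] using hsum

/-- The one-variable factor `w^{k-x} e^{t(w-1)} / ((w-α)(w-1)^k)` of the integrand of `Qker`. -/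
noncomputable def kernelFactor (α t : ℝ) (k : ℕ) (x : ℤ) (w : ℂ) : ℂ :=
  w ^ ((k : ℤ) - x) * exp (t * (w - 1)) / ((w - α) * (w - 1) ^ k)

/-- The integrand of `Qker` as a function of the point `z = (w, u)` of the torus. -/
noncomputable def kernelIntegrand (α t : ℝ) (k l : ℕ) (x y : ℤ) (z : Fin 2 → ℂ) : ℂ :=
  (z 1 - z 0) / (1 - z 1 - z 0) * kernelFactor α t k x (z 0) * kernelFactor α t l y (z 1)

section

variable {α t R : ℝ} {w : ℂ} {k l : ℕ} {x y : ℤ}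

lemma kernelFactor_natCast_add (hw : w ≠ 0) (m : ℕ) :
    kernelFactor α t k (m + x) w = kernelFactor α t k x w * w⁻¹ ^ m := by
  rw [kernelFactor, kernelFactor, add_comm, ← sub_sub, zpow_sub₀ hw _ (m : ℤ), zpow_natCast,
    inv_pow]
  ring

lemma kernelFactor_add (hw : w ≠ 0) (i : ℕ) :
    kernelFactor α t (i + k) x w = kernelFactor α t k x w * ((1 - w⁻¹) ^ i)⁻¹ := by
  have hsub : 1 - w⁻¹ = (w - 1) / w := by field_simp
  rw [kernelFactor, kernelFactor, Nat.cast_add, add_sub_assoc, zpow_add₀ hw, zpow_natCast, hsub,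
    div_pow, inv_div, pow_add]
  simp only [div_eq_mul_inv, mul_inv]
  ring

lemma continuous_kernelFactor_circleMap (hα : |α| ≠ R) (hR : 1 < R) :
    Continuous fun θ ↦ kernelFactor α t k x (circleMap 0 R θ) := by
  have hne {a : ℂ} (ha : ‖a‖ ≠ R) (θ : ℝ) : circleMap 0 R θ - a ≠ 0 := fun h ↦
    ha (by rw [← sub_eq_zero.1 h, norm_circleMap_zero, abs_of_pos (by linarith)])
  have hzpow : Continuous fun θ ↦ circleMap 0 R θ ^ ((k : ℤ) - x) :=
    (continuous_circleMap 0 R).zpow₀ _ fun θ ↦ .inl (circleMap_ne_center (by linarith))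
  unfold kernelFactor
  exact (hzpow.mul (by fun_prop)).div (by fun_prop) fun θ ↦
    mul_ne_zero (hne (by simpa using hα) θ) (pow_ne_zero _ (hne (by simpa using hR.ne) θ))

lemma torusIntegrable_kernelIntegrand (hα : |α| ≠ R) (hR : 1 < R) :
    TorusIntegrable (kernelIntegrand α t k l x y) 0 fun _ ↦ R := by
  have hmap (i : Fin 2) : Continuous fun θ ↦ torusMap 0 (fun _ ↦ R) θ i :=
    (continuous_circleMap 0 R).comp (continuous_apply i)
  have hfactor {k : ℕ} {x : ℤ} (i : Fin 2) :
      Continuous fun θ : Fin 2 → ℝ ↦ kernelFactor α t k x (torusMap 0 (fun _ ↦ R) θ i) :=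
    (continuous_kernelFactor_circleMap hα hR).comp (continuous_apply i)
  have h := torusIntegrable_mul_continuous (torusIntegrable_inv_one_sub_sub (by linarith))
    (g := fun z ↦ (z 1 - z 0) * (kernelFactor α t k x (z 0) * kernelFactor α t l y (z 1)))
    (((hmap 1).sub (hmap 0)).mul ((hfactor 0).mul (hfactor 1)))
  convert! h using 2 with z
  rw [kernelIntegrand]
  ring

lemma Qker_eq_torusIntegral (hα : |α| ≠ R) (hR : 1 < R) :
    Qker α t R k l x y = (α : ℂ) ^ 2 * ((2 * Real.pi * I)⁻¹) ^ 2 *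
      ∯ z in T(0, fun _ ↦ R), kernelIntegrand α t k l x y z := by
  rw [torusIntegral_fin_two (torusIntegrable_kernelIntegrand hα hR)]
  rfl

lemma kernelIntegrand_natCast_add {z : Fin 2 → ℂ} (hz : ∀ i, z i ≠ 0) (m n : ℕ) :
    kernelIntegrand α t k l (m + x) (n + y) z =
      kernelIntegrand α t k l x y z * ((z 0)⁻¹ ^ m * (z 1)⁻¹ ^ n) := by
  simp only [kernelIntegrand, kernelFactor_natCast_add (hz _)]
  ring

lemma kernelIntegrand_add {z : Fin 2 → ℂ} (hz : ∀ i, z i ≠ 0) (i j : ℕ) :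
    kernelIntegrand α t (i + k) (j + l) x y z =
      kernelIntegrand α t k l x y z * (((1 - (z 0)⁻¹) ^ i)⁻¹ * ((1 - (z 1)⁻¹) ^ j)⁻¹) := by
  simp only [kernelIntegrand, kernelFactor_add (hz _)]
  ring

lemma Qker_natCast_add (hα : |α| ≠ R) (hR : 1 < R) (m n : ℕ) :
    Qker α t R k l (m + x) (n + y) = (α : ℂ) ^ 2 * ((2 * Real.pi * I)⁻¹) ^ 2 *
      ∯ z in T(0, fun _ ↦ R), kernelIntegrand α t k l x y z * ((z 0)⁻¹ ^ m * (z 1)⁻¹ ^ n) :=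
  (Qker_eq_torusIntegral hα hR).trans <| congrArg _ <| torusIntegral_congr fun _ ↦
    kernelIntegrand_natCast_add (fun _ ↦ circleMap_ne_center (by linarith)) m n

lemma Qker_add (hα : |α| ≠ R) (hR : 1 < R) (i j : ℕ) :
    Qker α t R (i + k) (j + l) x y = (α : ℂ) ^ 2 * ((2 * Real.pi * I)⁻¹) ^ 2 *
      ∯ z in T(0, fun _ ↦ R), kernelIntegrand α t k l x y z *
        (((1 - (z 0)⁻¹) ^ i)⁻¹ * ((1 - (z 1)⁻¹) ^ j)⁻¹) :=
  (Qker_eq_torusIntegral hα hR).trans <| congrArg _ <| torusIntegral_congr fun _ ↦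
    kernelIntegrand_add (fun _ ↦ circleMap_ne_center (by linarith)) i j

end

theorem theta_Q_double_sum_general {α R : ℝ} (t : ℝ) (hα : |α| ≠ R) (hR : 1 < R) (k l : ℕ)
    (x y : ℤ) {i j : ℕ} (hi : 1 ≤ i) (hj : 1 ≤ j) :
    HasSum (fun p : ℕ × ℕ ↦ (ThetaBin i (p.1 + 1) : ℂ) * Qker α t R k l (p.1 + x) (p.2 + y) *
      (ThetaBin j (p.2 + 1) : ℂ)) (Qker α t R (i + k) (j + l) x y) := by
  have h := hasSum_torusIntegral_mul_thetaBin hR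
    (torusIntegrable_kernelIntegrand (t := t) (k := k) (l := l) (x := x) (y := y) hα hR) hi hj
  rw [Qker_add hα hR]
  refine (h.mul_left _).congr_fun fun p ↦ ?_
  rw [Qker_natCast_add hα hR]
  ring

/-- double summation identity for the TASEP kernel against Pochhammer
polynomials: `∑_{x,y ≥ 1} Θ_i(x) Q_{1,1}(x,y) Θ_j(y) = Q_{i+1,j+1}(1,1)`, with
absolute convergence; the circles have radius `R > 1` and enclose `1`, `α`, `1-α`. -/
theorem theta_Q_double_sum (α t R : ℝ) (ht : 0 < t) (hα0 : 0 < α) (hα1 : α < 1)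
    (hR : 1 < R) (i j : ℕ) (hi : 1 ≤ i) (hj : 1 ≤ j) :
    Summable (fun p : ℕ × ℕ =>
      ‖(ThetaBin i (p.1 + 1) : ℂ) * Qker α t R 1 1 ((p.1 : ℤ) + 1) ((p.2 : ℤ) + 1) *
        (ThetaBin j (p.2 + 1) : ℂ)‖) ∧
    ∑' (x : ℕ) (y : ℕ),
        (ThetaBin i (x + 1) : ℂ) * Qker α t R 1 1 ((x : ℤ) + 1) ((y : ℤ) + 1) *
          (ThetaBin j (y + 1) : ℂ)
      = Qker α t R (i + 1) (j + 1) 1 1 := by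
  have h := theta_Q_double_sum_general t (by rw [abs_of_pos hα0]; linarith) hR 1 1 1 1 hi hj
  exact ⟨h.summable.norm, by rw [← h.summable.tsum_prod]; exact h.tsum_eq⟩
end
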